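/- Let σ and τ be nonempty permutations with finest decompositions σ = σ₁ ⊕ ⋯ ⊕ σ_s and τ = τ₁ ⊕ ⋯ ⊕ τ_t with t ≥ 2 and τ₁ = 1. Let k ≥ 1 be the largest integer with τ₁ = ⋯ = τ_k = 1 and ℓ ≥ 0 the largest integer with σ₁ = ⋯ = σ_ℓ = 1. Then μ(σ,τ) = 0 if k−1 > ℓ; μ(σ,τ) = −μ(σ_{>k−1}, τ_{>k}) if k−1 = ℓ; and μ(σ,τ) = μ(σ_{>k}, τ_{>k}) − μ(σ_{>k−1}, τ_{>k}) if k−1 < ℓ. -/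

import Mathlib

open scoped Classical

/-- The set of all (finite) permutations, as patterns: a permutation of length `n`
together with its length. -/
abbrev PermPt := Σ n : ℕ, Equiv.Perm (Fin n)

/-- Pattern containment order: `σ` occurs in `τ` if there is a strictly monotone
choice of positions on which `τ` is order-isomorphic to `σ`. -/
def ple (σ τ : PermPt) : Prop :=
  ∃ f : Fin σ.1 → Fin τ.1, StrictMono f ∧
    ∀ a b : Fin σ.1, σ.2 a ≤ σ.2 b ↔ τ.2 (f a) ≤ τ.2 (f b)

/-- Strict pattern containment. -/
def plt (σ τ : PermPt) : Prop := ple σ τ ∧ ¬ ple τ σ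

/-- Direct sum of permutations. -/
def pds {m n : ℕ} (α : Equiv.Perm (Fin m)) (β : Equiv.Perm (Fin n)) :
    Equiv.Perm (Fin (m + n)) :=
  finSumFinEquiv.symm.trans ((Equiv.sumCongr α β).trans finSumFinEquiv)

/-- Skew sum of permutations. -/
def pss {m n : ℕ} (α : Equiv.Perm (Fin m)) (β : Equiv.Perm (Fin n)) :
    Equiv.Perm (Fin (m + n)) :=
  finSumFinEquiv.symm.trans
    (((Equiv.sumCongr α β).trans (Equiv.sumComm (Fin m) (Fin n))).trans
      (finSumFinEquiv.trans (finCongr (Nat.add_comm n m))))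

/-- Direct sum, as an operation on `PermPt`. -/
def pdsP (a b : PermPt) : PermPt := ⟨a.1 + b.1, pds a.2 b.2⟩

/-- Skew sum, as an operation on `PermPt`. -/
def pssP (a b : PermPt) : PermPt := ⟨a.1 + b.1, pss a.2 b.2⟩

/-- The empty permutation. -/
def pempty : PermPt := ⟨0, 1⟩

/-- The permutation `1` of length one. -/
def pone : PermPt := ⟨1, 1⟩

/-- A permutation is decomposable if it is the direct sum of two nonempty
permutations, i.e. some proper nonempty initial segment of positions is mapped
to the corresponding initial segment of values. -/
def Decomp {n : ℕ} (σ : Equiv.Perm (Fin n)) : Prop :=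
  ∃ m : ℕ, 0 < m ∧ m < n ∧ ∀ i : Fin n, (i : ℕ) < m → (σ i : ℕ) < m

/-- Disconnectedness of a set of permutations under pattern containment:
it splits into two nonempty parts with no comparabilities between them. -/
def Disconn (S : Set PermPt) : Prop :=
  ∃ A B : Set PermPt, A ∪ B = S ∧ A.Nonempty ∧ B.Nonempty ∧
    ∀ x ∈ A, ∀ y ∈ B, ¬ ple x y ∧ ¬ ple y x

/-- Direct sum of a list of permutations. -/
def psum (l : List PermPt) : PermPt := l.foldr pdsP pempty

/-- `mu` is the Möbius function of the pattern poset (including the empty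
permutation): `mu x x = 1`, `mu x z = 0` when `x ≰ z`, and the values of `mu`
on an interval `[x,z]` with `x < z` sum to zero. -/
def IsMobius (mu : PermPt → PermPt → ℤ) : Prop :=
  (∀ x : PermPt, mu x x = 1) ∧
  (∀ x z : PermPt, ¬ ple x z → mu x z = 0) ∧
  (∀ x z : PermPt, ple x z → x ≠ z →
    ∑ᶠ y ∈ {y : PermPt | ple x y ∧ ple y z}, mu x y = 0)

theorem pp_ext {x y : PermPt} (h : x.1 = y.1)
    (h2 : ∀ (i : ℕ) (hi : i < x.1) (hj : i < y.1), ((x.2 ⟨i, hi⟩ : Fin x.1) : ℕ) = (y.2 ⟨i, hj⟩ : Fin y.1)) :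
    x = y := by
  obtain ⟨n, e⟩ := x
  obtain ⟨m, g⟩ := y
  dsimp only at h
  subst h
  congr 1
  ext i
  exact h2 i i.2 i.2

theorem ple_refl' (x : PermPt) : ple x x := ⟨id, strictMono_id, fun _ _ => Iff.rfl⟩

theorem ple_trans' {x y z : PermPt} (h1 : ple x y) (h2 : ple y z) : ple x z := by
  obtain ⟨f, hf, hf2⟩ := h1
  obtain ⟨g, hg, hg2⟩ := h2
  exact ⟨g ∘ f, hg.comp hf, fun a b => (hf2 a b).trans (hg2 _ _)⟩

theorem ple_len {x y : PermPt} (h : ple x y) : x.1 ≤ y.1 := by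
  obtain ⟨f, hf, _⟩ := h
  simpa using Fintype.card_le_of_injective f hf.injective

theorem ple_antisymm' {x y : PermPt} (h1 : ple x y) (h2 : ple y x) : x = y := by
  have hl := le_antisymm (ple_len h1) (ple_len h2)
  obtain ⟨n, e⟩ := x
  obtain ⟨m, g⟩ := y
  dsimp only at hl
  subst hl
  obtain ⟨f, hf, hf2⟩ := h1
  dsimp only at f hf hf2
  have hid : ∀ a, f a = a := by
    have hb : Function.Bijective f := Finite.injective_iff_bijective.1 hf.injective
    let o : Fin n ≃o Fin n := hf.orderIsoOfSurjective f hb.2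
    have : o = OrderIso.refl _ := Subsingleton.elim _ _
    intro a
    exact congrArg (fun o : Fin n ≃o Fin n => o a) this
  simp only [hid] at hf2
  let o : Fin n ≃o Fin n := ⟨e.symm.trans g, by
    intro a b
    simp [← hf2]⟩
  have ho : o = OrderIso.refl _ := Subsingleton.elim _ _
  congr 1
  ext a
  have := congrArg (fun o : Fin n ≃o Fin n => o (e a)) ho
  have h3 : g (e.symm (e a)) = e a := this
  simp at h3
  rw [h3]

theorem finite_below (z : PermPt) : {y : PermPt | ple y z}.Finite := by
  have : (Set.range (fun p : (Σ n : Fin (z.1 + 1), Equiv.Perm (Fin n)) =>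
      (⟨p.1, p.2⟩ : PermPt))).Finite := Set.finite_range _
  refine this.subset ?_
  rintro ⟨n, e⟩ hy
  have := ple_len hy
  exact ⟨⟨⟨n, by simpa using Nat.lt_succ_of_le this⟩, e⟩, rfl⟩

/-- Prepend a component `1`. -/
def phi (x : PermPt) : PermPt := pdsP pone x

theorem phi_len (x : PermPt) : (phi x).1 = 1 + x.1 := rfl

theorem pds_left {m n : ℕ} (α : Equiv.Perm (Fin m)) (β : Equiv.Perm (Fin n)) (i : ℕ) (hi : i < m)
    (h : i < m + n) : ((pds α β ⟨i, h⟩ : Fin (m+n)) : ℕ) = α ⟨i, hi⟩ := by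
  have : finSumFinEquiv.symm (⟨i, h⟩ : Fin (m+n)) = Sum.inl ⟨i, hi⟩ :=
    finSumFinEquiv_symm_apply_castAdd (⟨i, hi⟩ : Fin m)
  simp only [pds, Equiv.trans_apply, this]
  simp

theorem pds_right {m n : ℕ} (α : Equiv.Perm (Fin m)) (β : Equiv.Perm (Fin n)) (i : ℕ) (hi : i < n)
    (h : m + i < m + n) : ((pds α β ⟨m + i, h⟩ : Fin (m+n)) : ℕ) = m + β ⟨i, hi⟩ := by
  have : finSumFinEquiv.symm (⟨m + i, h⟩ : Fin (m+n)) = Sum.inr ⟨i, hi⟩ :=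
    finSumFinEquiv_symm_apply_natAdd (⟨i, hi⟩ : Fin n)
  simp only [pds, Equiv.trans_apply, this]
  simp

theorem phi_zero (x : PermPt) (h : 0 < (phi x).1) : (((phi x).2 ⟨0, h⟩ : Fin _) : ℕ) = 0 := by
  have := pds_left pone.2 x.2 0 (by decide) (by simp [pone])
  exact this.trans (by simp [pone])

theorem phi_succ (x : PermPt) (i : ℕ) (hi : i < x.1) (h : 1 + i < (phi x).1) :
    (((phi x).2 ⟨1 + i, h⟩ : Fin _) : ℕ) = 1 + x.2 ⟨i, hi⟩ :=
  pds_right pone.2 x.2 i hi h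

theorem phi_succ' (x : PermPt) (j : Fin (phi x).1) (hj : 0 < (j : ℕ)) :
    (((phi x).2 j : Fin _) : ℕ) = 1 + x.2 ⟨j - 1, by have := j.2; have := phi_len x; omega⟩ := by
  have := phi_succ x (j - 1) (by have := j.2; have := phi_len x; omega) (by have := j.2; omega)
  rw [← this]
  congr 3
  ext
  simp; omega

theorem ple_phi (x : PermPt) : ple x (phi x) := by
  refine ⟨fun i => ⟨1 + i, by rw [phi_len]; omega⟩, ?_, ?_⟩
  · intro a b hab
    simp only [Fin.mk_lt_mk, Fin.lt_def] at *
    omega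
  · intro a b
    rw [Fin.le_def, Fin.le_def, phi_succ x a a.2, phi_succ x b b.2]
    simp

theorem ple_pred {x b : PermPt} (f : Fin x.1 → Fin (phi b).1) (hf : StrictMono f)
    (hf2 : ∀ i j, x.2 i ≤ x.2 j ↔ (phi b).2 (f i) ≤ (phi b).2 (f j))
    (hpos : ∀ i, 0 < ((f i : Fin _) : ℕ)) : ple x b := by
  refine ⟨fun i => ⟨f i - 1, by have := (f i).2; have := hpos i; have := phi_len b; omega⟩, ?_, ?_⟩
  · intro i j hij
    have := hf hij
    have := hpos i
    simp only [Fin.mk_lt_mk, Fin.lt_def] at *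
    omega
  · intro i j
    rw [hf2, Fin.le_def, phi_succ' b _ (hpos i), phi_succ' b _ (hpos j)]
    simp

theorem phi_ple_phi {a b : PermPt} : ple (phi a) (phi b) ↔ ple a b := by
  constructor
  · rintro ⟨f, hf, hf2⟩
    refine ple_pred (fun i => f ⟨1 + i, by rw [phi_len]; omega⟩) ?_ ?_ ?_
    · intro i j hij
      apply hf
      simp only [Fin.mk_lt_mk, Fin.lt_def] at *
      omega
    · intro i j
      rw [← hf2, Fin.le_def, Fin.le_def, phi_succ a i i.2, phi_succ a j j.2]
      simp
    · intro i
      have : f ⟨0, by rw [phi_len]; omega⟩ < f ⟨1 + i, by rw [phi_len]; omega⟩ := by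
        apply hf
        simp only [Fin.mk_lt_mk]
        omega
      rw [Fin.lt_def] at this
      omega
  · rintro ⟨f, hf, hf2⟩
    have hb : ∀ (i : Fin (phi a).1), 0 < (i : ℕ) → (i : ℕ) - 1 < a.1 := by
      intro i hi
      have := i.2
      have := phi_len a
      omega
    let g : Fin (phi a).1 → Fin (phi b).1 := fun i =>
      if h : 0 < (i : ℕ) then ⟨1 + f ⟨i - 1, hb i h⟩, by have := phi_len b; have := (f ⟨i - 1, hb i h⟩).2; omega⟩
      else ⟨0, by rw [phi_len]; omega⟩
    have g1 : ∀ (i : Fin (phi a).1) (h : 0 < (i : ℕ)), g i = ⟨1 + f ⟨i - 1, hb i h⟩, by have := phi_len b; have := (f ⟨i - 1, hb i h⟩).2; omega⟩ :=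
      fun i h => dif_pos h
    have g0 : ∀ i : Fin (phi a).1, ¬ 0 < (i : ℕ) → g i = ⟨0, by rw [phi_len]; omega⟩ :=
      fun i h => dif_neg h
    have a0 : ∀ i : Fin (phi a).1, ¬ 0 < (i : ℕ) → (((phi a).2 i : Fin _) : ℕ) = 0 := by
      intro i hi
      have : i = ⟨0, by rw [phi_len]; omega⟩ := by ext; simp; omega
      rw [this, phi_zero]
    refine ⟨g, ?_, ?_⟩
    · intro i j hij
      rw [Fin.lt_def] at hij
      have hj : 0 < (j : ℕ) := by omega
      rw [Fin.lt_def, g1 j hj]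
      by_cases hi : 0 < (i : ℕ)
      · rw [g1 i hi]
        have : f ⟨i - 1, hb i hi⟩ < f ⟨j - 1, hb j hj⟩ := by
          apply hf
          simp only [Fin.mk_lt_mk]
          omega
        rw [Fin.lt_def] at this
        simpa using this
      · rw [g0 i hi]
        simp
    · intro i j
      rw [Fin.le_def, Fin.le_def]
      by_cases hi : 0 < (i : ℕ) <;> by_cases hj : 0 < (j : ℕ)
      · rw [g1 i hi, g1 j hj, phi_succ b _ (Fin.is_lt _), phi_succ b _ (Fin.is_lt _),
          phi_succ' a i hi, phi_succ' a j hj]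
        have := hf2 ⟨i - 1, hb i hi⟩ ⟨j - 1, hb j hj⟩
        rw [Fin.le_def, Fin.le_def] at this
        simpa using this
      · rw [g1 i hi, g0 j hj, phi_succ b _ (Fin.is_lt _), phi_zero,
          phi_succ' a i hi, a0 j hj]
        simp
      · rw [g0 i hi, phi_zero, a0 i hi]
        simp
      · rw [g0 i hi, phi_zero, a0 i hi]
        simp

theorem phi_inj : Function.Injective phi := by
  intro a b h
  exact ple_antisymm' (phi_ple_phi.1 (h ▸ ple_refl' _)) (phi_ple_phi.1 (h ▸ ple_refl' _))

theorem mem_range_phi {y : PermPt} (h : 0 < y.1) (h0 : ((y.2 ⟨0, h⟩ : Fin _) : ℕ) = 0) :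
    y ∈ Set.range phi := by
  obtain ⟨n, e⟩ := y
  obtain _ | n := n
  · simp at h
  dsimp only at h h0
  have hne : ∀ i : Fin n, e i.succ ≠ 0 := by
    intro i hi
    have h1 : e 0 = 0 := by ext; exact h0
    have := e.injective (hi.trans h1.symm)
    exact Fin.succ_ne_zero _ this
  let q : Fin n → Fin n := fun i => (e i.succ).pred (hne i)
  have hq : Function.Injective q := by
    intro i j hij
    have := Fin.pred_inj.1 hij
    exact Fin.succ_injective _ (e.injective this)
  let qe : Equiv.Perm (Fin n) := Equiv.ofBijective q (Finite.injective_iff_bijective.1 hq)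
  refine ⟨⟨n, qe⟩, pp_ext (by rw [phi_len]; simp; omega) ?_⟩
  intro i hi hj
  obtain _ | i := i
  · rw [phi_zero]; exact h0.symm
  · rw [phi_succ' _ _ (by simp)]
    have hin : i < n := by simpa using hj
    have : ((e (Fin.succ ⟨i, hin⟩) : Fin (n+1)) : ℕ) ≠ 0 := fun hh => hne ⟨i, hin⟩ (Fin.ext hh)
    show 1 + ((q ⟨i, _⟩ : Fin n) : ℕ) = ((e (Fin.succ ⟨i, hin⟩) : Fin (n+1)) : ℕ)
    simp only [q, Fin.val_pred, Nat.add_sub_cancel]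
    omega

theorem ple_phi_iff {y b : PermPt} (hy : y ∉ Set.range phi) : ple y (phi b) ↔ ple y b := by
  refine ⟨?_, fun h => ple_trans' h (ple_phi b)⟩
  rintro ⟨f, hf, hf2⟩
  refine ple_pred f hf hf2 ?_
  intro i
  by_contra hi
  apply hy
  have hlen : 0 < y.1 := by have := i.2; omega
  refine mem_range_phi hlen ?_
  have hfi : f i = ⟨0, by rw [phi_len]; omega⟩ := by ext; simp; omega
  have hle : ∀ j, y.2 i ≤ y.2 j := by
    intro j
    rw [hf2, hfi, Fin.le_def, phi_zero]
    omega
  have hi0 : i = ⟨0, hlen⟩ := by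
    have : f ⟨0, hlen⟩ ≤ f i := hf.monotone (by rw [Fin.le_def]; simp)
    apply hf.injective
    ext
    rw [Fin.le_def, hfi] at this
    rw [hfi]
    simp at this ⊢
    omega
  rw [← hi0]
  have := hle (y.2.symm ⟨0, hlen⟩)
  rw [Fin.le_def] at this
  simpa using this

/-- The finite set of permutations below `z`. -/
noncomputable def below (z : PermPt) : Finset PermPt := (finite_below z).toFinset

theorem mem_below {y z : PermPt} : y ∈ below z ↔ ple y z := by
  simp [below]

theorem sum_below {mu : PermPt → PermPt → ℤ} (hmu : IsMobius mu) (x z : PermPt) :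
    ∑ y ∈ below z, mu x y = if x = z then 1 else 0 := by
  obtain ⟨h1, h2, h3⟩ := hmu
  split_ifs with h
  · subst h
    rw [Finset.sum_eq_single x, h1]
    · intro y hy hyx
      apply h2
      intro hxy
      exact hyx (ple_antisymm' (mem_below.1 hy) hxy)
    · intro hh
      exact absurd (mem_below.2 (ple_refl' x)) hh
  · by_cases hxz : ple x z
    · rw [← h3 x z hxz h]
      symm
      apply finsum_mem_eq_sum_of_inter_support_eq
      ext y
      simp only [Set.mem_inter_iff, Set.mem_setOf_eq, Function.mem_support, Finset.mem_coe,
        mem_below]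
      constructor
      · rintro ⟨⟨_, h⟩, h'⟩; exact ⟨h, h'⟩
      · rintro ⟨h, h'⟩
        exact ⟨⟨by_contra fun hn => h' (h2 _ _ hn), h⟩, h'⟩
    · apply Finset.sum_eq_zero
      intro y hy
      apply h2
      intro hxy
      exact hxz (ple_trans' hxy (mem_below.1 hy))

theorem below_phi (r : PermPt) : below (phi r) =
    (below r).filter (fun y => y ∉ Set.range phi) ∪ (below r).image phi := by
  ext y
  simp only [Finset.mem_union, Finset.mem_filter, Finset.mem_image, mem_below]
  by_cases hy : y ∈ Set.range phi
  · obtain ⟨z, rfl⟩ := hy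
    rw [phi_ple_phi]
    constructor
    · intro h; exact Or.inr ⟨z, h, rfl⟩
    · rintro (h | ⟨w, h, hw⟩)
      · exact absurd ⟨z, rfl⟩ h.2
      · exact phi_inj hw ▸ h
  · rw [ple_phi_iff hy]
    constructor
    · intro h; exact Or.inl ⟨h, hy⟩
    · rintro (h | ⟨w, h, hw⟩)
      · exact h.1
      · exact absurd ⟨w, hw⟩ hy

theorem eq_zero_of_sum_below (H : PermPt → ℤ) (h : ∀ z, ∑ y ∈ below z, H y = 0) (z : PermPt) :
    H z = 0 := by
  induction hn : z.1 using Nat.strong_induction_on generalizing z with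
  | _ n ih =>
    rw [← h z]
    symm
    apply Finset.sum_eq_single z
    · intro y hy hyz
      have hl := mem_below.1 hy
      rcases (ple_len hl).lt_or_eq with h1 | h1
      · exact ih y.1 (hn ▸ h1) y rfl
      · exfalso
        apply hyz
        obtain ⟨f, hf, hf2⟩ := hl
        obtain ⟨m, e⟩ := y
        obtain ⟨m', g⟩ := z
        dsimp only at h1
        subst h1
        dsimp only at f hf hf2
        have hb : Function.Bijective f := Finite.injective_iff_bijective.1 hf.injective
        let o : Fin m ≃o Fin m := hf.orderIsoOfSurjective f hb.2
        refine ple_antisymm' ⟨f, hf, hf2⟩ ⟨o.symm, o.symm.strictMono, ?_⟩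
        intro a b
        dsimp only
        rw [hf2]
        have : ∀ a, f (o.symm a) = a := fun a => o.apply_symm_apply a
        rw [this, this]
    · intro hh
      exact absurd (mem_below.2 (ple_refl' z)) hh

theorem mobius_phi {mu : PermPt → PermPt → ℤ} (hmu : IsMobius mu) (F : PermPt → ℤ) (x : PermPt)
    (hF : ∀ r, ∑ z ∈ below r, F z = if x = phi r then 1 else 0) (z : PermPt) :
    mu x (phi z) = F z - if z ∉ Set.range phi then mu x z else 0 := by
  have key := eq_zero_of_sum_below
    (fun z => mu x (phi z) - F z + if z ∉ Set.range phi then mu x z else 0) ?_ z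
  · linarith
  intro r
  have h1 := sum_below hmu x (phi r)
  rw [below_phi, Finset.sum_union, Finset.sum_image (fun a _ b _ h => phi_inj h),
    Finset.sum_filter] at h1
  · rw [Finset.sum_add_distrib, Finset.sum_sub_distrib, hF]
    linarith
  · rw [Finset.disjoint_left]
    intro a ha hb
    obtain ⟨w, _, hw⟩ := Finset.mem_image.1 hb
    exact (Finset.mem_filter.1 ha).2 ⟨w, hw⟩

theorem mobius_phi_phi {mu : PermPt → PermPt → ℤ} (hmu : IsMobius mu) (x z : PermPt) :
    mu (phi x) (phi z) = mu x z - if z ∉ Set.range phi then mu (phi x) z else 0 := by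
  apply mobius_phi hmu (fun z => mu x z)
  intro r
  rw [sum_below hmu]
  simp [phi_inj.eq_iff]

theorem mobius_not_phi {mu : PermPt → PermPt → ℤ} (hmu : IsMobius mu) (x z : PermPt)
    (hx : x ∉ Set.range phi) :
    mu x (phi z) = - if z ∉ Set.range phi then mu x z else 0 := by
  rw [mobius_phi hmu (fun _ => 0) x, zero_sub]
  intro r
  rw [if_neg (fun h => hx ⟨r, h.symm⟩)]
  simp

theorem mobius_iter {mu : PermPt → PermPt → ℤ} (hmu : IsMobius mu) (S T : PermPt)
    (hS : S ∉ Set.range phi) (hT : T ∉ Set.range phi) (k l : ℕ) :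
    (l < k → mu (phi^[l] S) (phi^[k + 1] T) = 0) ∧
    (k = l → mu (phi^[l] S) (phi^[k + 1] T) = - mu S T) ∧
    (k < l → mu (phi^[l] S) (phi^[k + 1] T) =
      mu (phi^[l - (k + 1)] S) T - mu (phi^[l - k] S) T) := by
  induction k generalizing l with
  | zero =>
    refine ⟨by omega, ?_, ?_⟩
    · rintro rfl
      simp only [zero_add, Function.iterate_zero, Function.iterate_one, id]
      rw [mobius_not_phi hmu _ _ hS, if_pos hT]
    · intro h
      obtain ⟨l, rfl⟩ : ∃ m, l = m + 1 := ⟨l - 1, by omega⟩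
      simp only [Function.iterate_succ_apply', Function.iterate_zero, id, Nat.add_sub_cancel,
        Nat.sub_zero, zero_add]
      rw [mobius_phi_phi hmu, if_pos hT]
  | succ k ih =>
    have hr : phi^[k + 1] T ∈ Set.range phi := by
      rw [Function.iterate_succ_apply']; exact ⟨_, rfl⟩
    rw [Function.iterate_succ_apply' phi (k + 1) T]
    obtain _ | l := l
    · refine ⟨fun _ => ?_, by omega, by omega⟩
      simp only [Function.iterate_zero, id]
      rw [mobius_not_phi hmu _ _ hS, if_neg (not_not.2 hr), neg_zero]
    · rw [Function.iterate_succ_apply' phi l S, mobius_phi_phi hmu, if_neg (not_not.2 hr), sub_zero]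
      obtain ⟨a, b, c⟩ := ih l
      refine ⟨fun h => a (by omega), fun h => b (by omega), fun h => ?_⟩
      rw [c (by omega)]
      rw [Nat.add_sub_add_right, Nat.add_sub_add_right]

theorem psum_cons (c : PermPt) (l : List PermPt) : psum (c :: l) = pdsP c (psum l) := rfl

theorem psum_drop (l : List PermPt) (j : ℕ) (hj : j ≤ l.length)
    (h : ∀ (i : ℕ) (hi : i < l.length), i < j → l[i] = pone) :
    psum l = phi^[j] (psum (l.drop j)) := by
  induction j generalizing l with
  | zero => simp
  | succ j ih =>
    obtain _ | ⟨c, l⟩ := l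
    · simp at hj
    have hc : c = pone := h 0 (by simp) (by omega)
    subst hc
    rw [psum_cons, Function.iterate_succ_apply', List.drop_succ_cons, ← ih l (by simpa using hj)]
    · rfl
    · intro i hi hij
      exact h (i + 1) (by simpa using hi) (by omega)

theorem psum_not_phi (c : PermPt) (l : List PermPt) (h1 : 0 < c.1) (h2 : ¬ Decomp c.2)
    (h3 : c ≠ pone) : psum (c :: l) ∉ Set.range phi := by
  rintro ⟨x, hx⟩
  have hlen : 0 < (psum (c :: l)).1 := by rw [← hx, phi_len]; omega
  have h0 : (((psum (c :: l)).2 ⟨0, hlen⟩ : Fin _) : ℕ) = 0 := by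
    revert hlen
    rw [← hx]
    intro hlen
    exact phi_zero x hlen
  have hc : ((c.2 ⟨0, h1⟩ : Fin _) : ℕ) = 0 := by
    exact (pds_left c.2 (psum l).2 0 h1 hlen).symm.trans h0
  by_cases hc1 : c.1 = 1
  · apply h3
    refine pp_ext hc1 ?_
    intro i hi hj
    have : i = 0 := by omega
    subst this
    rw [hc]
    simp [pone]
  · apply h2
    refine ⟨1, one_pos, by omega, ?_⟩
    intro i hi
    have : i = ⟨0, h1⟩ := by ext; simp; omega
    rw [this, hc]
    exact one_pos

theorem psum_drop_not_phi (n : ℕ) (f : Fin n → PermPt)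
    (hcomp : ∀ m : Fin n, 0 < (f m).1 ∧ ¬ Decomp (f m).2) (k : ℕ)
    (hk : ∀ h : k < n, f ⟨k, h⟩ ≠ pone) : psum ((List.ofFn f).drop k) ∉ Set.range phi := by
  by_cases h : k < n
  · rw [List.drop_eq_getElem_cons (by simpa using h)]
    have : (List.ofFn f)[k]'(by simpa using h) = f ⟨k, h⟩ := by simp
    rw [this]
    exact psum_not_phi _ _ (hcomp _).1 (hcomp _).2 (hk h)
  · rw [List.drop_eq_nil_of_le (by simpa using h)]
    rintro ⟨x, hx⟩
    have := congrArg Sigma.fst hx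
    rw [phi_len] at this
    simp [psum, pempty] at this

theorem psum_drop_drop (n : ℕ) (f : Fin n → PermPt) (l : ℕ) (hl : l ≤ n)
    (h : ∀ i : Fin n, (i : ℕ) < l → f i = pone) (j : ℕ) (hj : j ≤ l) :
    psum ((List.ofFn f).drop j) = phi^[l - j] (psum ((List.ofFn f).drop l)) := by
  rw [psum_drop ((List.ofFn f).drop j) (l - j) (by simp; omega), List.drop_drop]
  · congr 3; omega
  · intro i hi hij
    rw [List.getElem_drop, List.getElem_ofFn]
    apply h
    simp
    omega

/-- Proposition 1 of Burstein–Jelínek–Jelínková–Steingrímsson: the Möbius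
function `μ(σ,τ)` when the finest decomposition of `τ` begins with `τ₁ = 1`,
where `k` is the number of leading components of `τ` equal to `1` and `ℓ` the
number of leading components of `σ` equal to `1`. -/
theorem mobius_tau_one_first (mu : PermPt → PermPt → ℤ) (hmu : IsMobius mu)
    (s t : ℕ) (hs : 1 ≤ s) (ht : 2 ≤ t)
    (σf : Fin s → PermPt) (τf : Fin t → PermPt)
    (hσcomp : ∀ m : Fin s, 0 < (σf m).1 ∧ ¬ Decomp (σf m).2)
    (hτcomp : ∀ m : Fin t, 0 < (τf m).1 ∧ ¬ Decomp (τf m).2)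
    (σ τ : PermPt)
    (hσ : σ = psum (List.ofFn σf)) (hτ : τ = psum (List.ofFn τf))
    (hτ1 : τf ⟨0, by omega⟩ = pone)
    (k : ℕ) (hk1 : 1 ≤ k) (hk2 : k ≤ t)
    (hk3 : ∀ i : Fin t, (i : ℕ) < k → τf i = pone)
    (hk4 : ∀ h : k < t, τf ⟨k, h⟩ ≠ pone)
    (ℓ : ℕ) (hl2 : ℓ ≤ s)
    (hl3 : ∀ i : Fin s, (i : ℕ) < ℓ → σf i = pone)
    (hl4 : ∀ h : ℓ < s, σf ⟨ℓ, h⟩ ≠ pone) :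
    (ℓ < k - 1 → mu σ τ = 0) ∧
    (k - 1 = ℓ → mu σ τ =
      - mu (psum ((List.ofFn σf).drop (k - 1))) (psum ((List.ofFn τf).drop k))) ∧
    (k - 1 < ℓ → mu σ τ =
      mu (psum ((List.ofFn σf).drop k)) (psum ((List.ofFn τf).drop k))
        - mu (psum ((List.ofFn σf).drop (k - 1)))
            (psum ((List.ofFn τf).drop k))) := by
  have hS := psum_drop_not_phi s σf hσcomp ℓ hl4
  have hT := psum_drop_not_phi t τf hτcomp k hk4
  obtain ⟨k, rfl⟩ : ∃ m, k = m + 1 := ⟨k - 1, by omega⟩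
  have h1 := psum_drop_drop s σf ℓ hl2 hl3 0 (Nat.zero_le _)
  have h2 := psum_drop_drop t τf (k + 1) hk2 hk3 0 (Nat.zero_le _)
  simp only [List.drop_zero, Nat.sub_zero] at h1 h2
  rw [← hσ] at h1
  rw [← hτ] at h2
  obtain ⟨a, b, c⟩ := mobius_iter hmu _ _ hS hT k ℓ
  rw [← h1, ← h2] at a b c
  rw [Nat.add_sub_cancel]
  refine ⟨a, ?_, ?_⟩
  · intro h
    rw [b h, h]
  · intro h
    rw [c h, psum_drop_drop s σf ℓ hl2 hl3 (k + 1) (by omega),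
      psum_drop_drop s σf ℓ hl2 hl3 k (by omega)]
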